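/- arXiv:2306.11522 — 3 statements merged into one kernel-verified Lean document; each statement's English description precedes it below -/
import Mathlib

section
/- Let F be a finite family of pairwise disjoint convex bodies contained in an axis-parallel closed rectangle R in ℝ², and let C ∈ F. Define the visibility region V(C) as the set of all points p ∈ R for which there exists a point q ∈ ∂C such that the closed segment [p,q] does not intersect the interior of any member of F. Then V(C) is nonempty and path-connected. -/
/-! Every boundary point of `C` sees itself, so `∂C` lies in the visibility region. A point `p` that
sees `q ∈ ∂C` is joined to `q` by the segment `[p,q]`, all of whose points also see `q` and lie in the
(convex) rectangle. Finally `∂C` is path-connected: a homeomorphism of the plane carries it to the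
unit circle. -/

open Set Metric ENNReal

noncomputable section

abbrev E2 := EuclideanSpace ℝ (Fin 2)

/-- A convex body in the plane: a compact convex set with nonempty interior. -/
def IsConvexBody (C : Set E2) : Prop :=
  Convex ℝ C ∧ IsCompact C ∧ (interior C).Nonempty

/-- The closed axis-parallel rectangle `[a,b] × [c,d]`. -/
def Rect (a b c d : ℝ) : Set E2 := {p | p 0 ∈ Icc a b ∧ p 1 ∈ Icc c d}

/-- The visibility region of `C` inside the rectangle `R`, with respect to the
family `F` of obstacles: points `p ∈ R` that see some boundary point of `C`. -/
def VisIn (F : Set (Set E2)) (R : Set E2) (C : Set E2) : Set E2 :=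
  {p | p ∈ R ∧ ∃ q ∈ frontier C, ∀ D ∈ F, Disjoint (segment ℝ p q) (interior D)}

theorem isPathConnected_frontier_of_isConvexBody {C : Set E2} (hC : IsConvexBody C) :
    IsPathConnected (frontier C) := by
  obtain ⟨hconv, hcomp, hint⟩ := hC
  obtain ⟨e, -, -, he⟩ := exists_homeomorph_image_interior_closure_frontier_eq_unitBall
    hconv hint hcomp.isBounded
  have hrank : 1 < Module.rank ℝ E2 := by
    rw [← Module.finrank_eq_rank, finrank_euclideanSpace_fin]
    norm_num
  rw [← e.isPathConnected_image, he]
  exact isPathConnected_sphere hrank 0 zero_le_one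

theorem convex_Rect (a b c d : ℝ) : Convex ℝ (Rect a b c d) := by
  intro x hx y hy s t hs ht hst
  exact ⟨convex_Icc a b hx.1 hy.1 hs ht hst, convex_Icc c d hx.2 hy.2 hs ht hst⟩

/-- The visibility region of a convex body, among finitely many pairwise disjoint
convex bodies inside an axis-parallel rectangle, is nonempty and path-connected. -/
theorem visibility_region_nonempty_pathConnected
    (F : Set (Set E2)) (hfin : F.Finite)
    (hbody : ∀ C ∈ F, IsConvexBody C)
    (hdisj : F.Pairwise Disjoint)
    (a b c d : ℝ) (hab : a < b) (hcd : c < d)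
    (hsub : ∀ C ∈ F, C ⊆ Rect a b c d)
    (C : Set E2) (hC : C ∈ F) :
    (VisIn F (Rect a b c d) C).Nonempty ∧ IsPathConnected (VisIn F (Rect a b c d) C) := by
  have hclosed : IsClosed C := (hbody C hC).2.1.isClosed
  have hfr : IsPathConnected (frontier C) := isPathConnected_frontier_of_isConvexBody (hbody C hC)
  have hfrV : frontier C ⊆ VisIn F (Rect a b c d) C := by
    intro q hq
    have hqC : q ∈ C := hclosed.frontier_subset hq
    refine ⟨hsub C hC hqC, q, hq, fun D hD => ?_⟩
    rw [segment_same, disjoint_singleton_left]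
    intro hqD
    rcases eq_or_ne C D with rfl | hne
    · exact hq.2 hqD
    · exact disjoint_left.1 (hdisj hC hD hne) hqC (interior_subset hqD)
  obtain ⟨q₀, hq₀, hjoin⟩ := hfr
  have hpc : IsPathConnected (VisIn F (Rect a b c d) C) := by
    refine ⟨q₀, hfrV hq₀, ?_⟩
    rintro p ⟨hpR, q, hq, hvis⟩
    have hseg : segment ℝ p q ⊆ VisIn F (Rect a b c d) C := fun x hx =>
      ⟨(convex_Rect a b c d).segment_subset hpR (hfrV hq).1 hx, q, hq, fun D hD =>
        (hvis D hD).mono_left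
          ((convex_segment p q).segment_subset hx (right_mem_segment ℝ p q))⟩
    exact ((hjoin hq).mono hfrV).trans (JoinedIn.of_segment_subset hseg).symm
  exact ⟨hpc.nonempty, hpc⟩

end
end

section
/- For every Δ > 0 there exists a family F of six pairwise disjoint closed axis-parallel unit squares in ℝ² such that: (i) the diameter of the convex hull of the union of F is at most 10; (ii) there exists a point p ∈ ℝ² from which every square of F can be seen; and (iii) every point p from which every square of F can be seen lies at Euclidean distance at least Δ from the convex hull of the union of F. -/
/-!
The six squares form a brick wall of three rows with two bricks each, where `ε` is tiny:

* top row: `[-1, 0]` and `[0.1, 1.1]`, at heights `[1 + ε, 2 + ε]`;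
* middle row: `[-0.5, 0.5]` at heights `[ε/2, 1 + ε/2]`, and `[0.6, 1.6]` at heights `[0, 1]`;
* bottom row: `[-1, 0]` and `[0.1, 1.1]`, at heights `[-1 - ε, -ε]`.

Let `p` be a point at height at least `1/2` that sees both bottom squares. Its two lines of sight
have to pass the middle row. The slit between the middle and the bottom row is so thin that a line
of sight which uses it is almost horizontal, which forces `|p 0|` to be of order `1 / ε`. Otherwise,
since the bricks are staggered, the left bottom square is seen only if `p 0 < 0` (passing to the
left of the middle row, `low_left`), and the right bottom square only if `0 < p 0` (`low_right`).
So `|p 0|` is large. The reflection `y ↦ 1 - y` maps the wall to itself up to the sign of the tiny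
vertical offset `c = ε/2` of the left middle square, so `core` is proved for all `|c| ≤ ε` and
also gives the case of points of height at most `1/2`.

Conversely, the point `(2/ε, 1/2)` sees all six squares: the three right ones directly, the left
ones through the slits. The offset `ε/2` is what makes the left middle square visible.
-/

open Set Metric ENNReal

noncomputable section

/-- The closed axis-parallel unit square `[a,a+1] × [b,b+1]`. -/
def UnitSq (a b : ℝ) : Set E2 := {p | p 0 ∈ Icc a (a + 1) ∧ p 1 ∈ Icc b (b + 1)}

/-- With respect to the obstacle family `F`, the body `C` can be seen from `p`:
there is a boundary point `q` of `C` such that the closed segment `[p,q]`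
misses the interior of every member of `F`. -/
def CanSee (F : Set (Set E2)) (p : E2) (C : Set E2) : Prop :=
  ∃ q ∈ frontier C, ∀ D ∈ F, Disjoint (segment ℝ p q) (interior D)

/-! ### Lines of sight in coordinates -/

/-- The segment from `(qx, qy)` to `(px, py)` misses the open unit square with lower left
corner `(a, b)`. -/
def Avoid (px py qx qy a b : ℝ) : Prop :=
  ∀ t : ℝ, 0 ≤ t → t ≤ 1 → ¬ ((a < qx + t * (px - qx) ∧ qx + t * (px - qx) < a + 1) ∧
    (b < qy + t * (py - qy) ∧ qy + t * (py - qy) < b + 1))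

theorem Avoid.reflect {px py qx qy a b : ℝ} (h : Avoid px py qx qy a b) :
    Avoid px (1 - py) qx (1 - qy) a (-b) := by
  rintro t h0 h1 ⟨hx, h2, h3⟩
  exact h t h0 h1 ⟨hx, by linarith, by linarith⟩

/-- A non-horizontal segment is a graph `x = k + m * y` over its range of heights. -/
theorem exists_graph {px py qx qy : ℝ} (hlt : qy < py) :
    ∃ k m : ℝ, qx = k + m * qy ∧ px = k + m * py ∧
      ∀ a b, Avoid px py qx qy a b → ∀ y, qy ≤ y → y ≤ py → b < y → y < b + 1 →
        (k + m * y ≤ a ∨ a + 1 ≤ k + m * y) := by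
  have hd : 0 < py - qy := by linarith
  refine ⟨qx - (px - qx) / (py - qy) * qy, (px - qx) / (py - qy), by ring, ?_, ?_⟩
  · field_simp
    ring
  · intro a b h y h1 h2 h3 h4
    by_contra hcon
    push Not at hcon
    have ex : qx + (y - qy) / (py - qy) * (px - qx)
        = qx - (px - qx) / (py - qy) * qy + (px - qx) / (py - qy) * y := by
      field_simp
      ring
    have ey : qy + (y - qy) / (py - qy) * (py - qy) = y := by
      field_simp
      ring
    refine h ((y - qy) / (py - qy)) (div_nonneg (by linarith) hd.le)
      ((div_le_one hd).2 (by linarith)) ?_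
    rw [ex, ey]
    exact ⟨hcon, h3, h4⟩

/-- One half of `crossing`: an affine function that avoids the values in `(a, a + 1)` on `(l, u)`
and is at most `a` at some point of `(l, u)` is at most `a` on all of `[l, u]`. -/
theorem crossing_aux {k m l u a y₀ e : ℝ} (hy₀ : l < y₀) (hy₀' : y₀ < u) (he : l ≤ e) (he' : e ≤ u)
    (h : ∀ y, l < y → y < u → (k + m * y ≤ a ∨ a + 1 ≤ k + m * y)) (hm : k + m * y₀ ≤ a) :
    k + m * e ≤ a := by
  by_contra hcon
  push Not at hcon
  -- `v` is a forbidden value strictly between the values at `y₀` and at `e`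
  obtain ⟨v, hv1, hv2⟩ := exists_between (lt_min hcon (show a < a + 1 by linarith))
  have hv3 := lt_of_lt_of_le hv2 (min_le_left _ _)
  have hv4 := lt_of_lt_of_le hv2 (min_le_right _ _)
  have hpos : 0 < (k + m * e) - (k + m * y₀) := by linarith
  set s := (v - (k + m * y₀)) / ((k + m * e) - (k + m * y₀)) with hs
  have hs0 : 0 < s := div_pos (by linarith) hpos
  have hs1 : s < 1 := (div_lt_one hpos).2 (by linarith)
  have hsv : s * ((k + m * e) - (k + m * y₀)) = v - (k + m * y₀) := by
    rw [hs]; field_simp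
  have hval : k + m * (y₀ + s * (e - y₀)) = v := by linarith
  have := h (y₀ + s * (e - y₀)) (by nlinarith) (by nlinarith)
  rw [hval] at this
  rcases this with h | h <;> linarith

/-- A line that crosses a horizontal strip and misses an open unit-width box there passes entirely
to the left or entirely to the right of the box. -/
theorem crossing {k m l u a : ℝ} (hlu : l < u)
    (h : ∀ y, l < y → y < u → (k + m * y ≤ a ∨ a + 1 ≤ k + m * y)) :
    (k + m * l ≤ a ∧ k + m * u ≤ a) ∨ (a + 1 ≤ k + m * l ∧ a + 1 ≤ k + m * u) := by
  obtain ⟨y₀, h1, h2⟩ := exists_between hlu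
  rcases h y₀ h1 h2 with h3 | h3
  · exact Or.inl ⟨crossing_aux h1 h2 le_rfl hlu.le h h3, crossing_aux h1 h2 hlu.le le_rfl h h3⟩
  · have h' : ∀ y, l < y → y < u →
        (-k + -m * y ≤ -(a + 1) ∨ -(a + 1) + 1 ≤ -k + -m * y) := by
      intro y hy hy'
      rcases h y hy hy' with h4 | h4
      · right; linarith
      · left; linarith
    have h3' : -k + -m * y₀ ≤ -(a + 1) := by linarith
    have e1 := crossing_aux h1 h2 le_rfl hlu.le h' h3'
    have e2 := crossing_aux h1 h2 hlu.le le_rfl h' h3'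
    right
    constructor <;> linarith

/-! ### Points that see both bottom squares are far away -/

/-- A point of height at least `1/2` that sees the left bottom square lies to the left of the
`y`-axis, unless it is far to the right. -/
theorem low_left {ε c M px py qx qy : ℝ} (hε : 0 < ε) (hε' : ε ≤ 1 / 160) (hM : 10 ≤ M)
    (hεM : ε * M ≤ 1 / 16) (hc : -ε ≤ c) (hc' : c ≤ ε) (hpy : 1 / 2 ≤ py)
    (hqx : -1 ≤ qx) (hqx' : qx ≤ 0) (hqy : -1 - ε ≤ qy) (hqy' : qy ≤ -ε)
    (hA1 : Avoid px py qx qy (-1) (1 + ε)) (hC : Avoid px py qx qy (-1 / 2) c)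
    (hB2 : Avoid px py qx qy (6 / 10) 0) (hB3 : Avoid px py qx qy (1 / 10) (-1 - ε)) :
    px < 0 ∨ M ≤ px := by
  obtain ⟨k, m, eq, ep, hg⟩ := exists_graph (px := px) (qx := qx) (show qy < py by linarith)
  have h1 : k + m * (-ε) ≤ 1 / 10 := by
    rcases hqy'.eq_or_lt with h | h
    · rw [← h]; linarith
    · rcases crossing h (fun y h1 h2 => hg _ _ hB3 y h1.le (by linarith) (by linarith)
        (by linarith)) with h2 | h2
      · exact h2.2
      · linarith
  rcases crossing (lt_min (show c < py by linarith) (show c < 1 + c by linarith))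
    (fun y h1 h2 => hg _ _ hC y (by linarith) (h2.le.trans (min_le_left _ _)) h1
      (by linarith [lt_of_lt_of_le h2 (min_le_right _ _)])) with ⟨h2, h3⟩ | ⟨h2, h3⟩
  · left
    rcases le_or_gt py (1 + c) with h4 | h4
    · rw [min_eq_left h4] at h3
      linarith
    · rw [min_eq_right h4.le] at h3
      have hm : m ≤ 1 / 2 := by
        by_contra hcon
        push Not at hcon
        nlinarith
      rcases le_or_gt py (1 + ε) with h5 | h5
      · nlinarith
      · rcases crossing (lt_min h5 (show 1 + ε < 2 + ε by linarith))
          (fun y h1 h2 => hg _ _ hA1 y (by linarith) (h2.le.trans (min_le_left _ _)) h1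
            (by linarith [lt_of_lt_of_le h2 (min_le_right _ _)])) with ⟨h6, -⟩ | ⟨h6, -⟩
        · have hm : m ≤ 0 := by
            by_contra hcon
            push Not at hcon
            nlinarith
          nlinarith
        · nlinarith
  · have hu : (1 / 2 : ℝ) ≤ min py 1 := le_min hpy (by norm_num)
    rcases crossing (show 0 < min py 1 by linarith)
      (fun y h1 h2 => hg _ _ hB2 y (by linarith) (h2.le.trans (min_le_left _ _)) h1
        (by linarith [lt_of_lt_of_le h2 (min_le_right _ _)])) with ⟨h4, h5⟩ | ⟨h4, h5⟩
    · exfalso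
      have hm0 : 0 < m := by
        by_contra hcon
        push Not at hcon
        nlinarith
      have hm : 1 / 5 ≤ m * ε := by nlinarith
      have hm' : 32 ≤ m := by nlinarith
      nlinarith
    · right
      have hm : 3 / 2 ≤ m * ε := by linarith
      have hm' : 24 * M ≤ m := by
        by_contra hcon
        push Not at hcon
        nlinarith
      nlinarith

/-- A point of height at least `1/2` that sees the right bottom square lies to the right of the
`y`-axis, unless it is far to the left. -/
theorem low_right {ε c M px py qx qy : ℝ} (hε : 0 < ε) (hε' : ε ≤ 1 / 160) (hM : 10 ≤ M)
    (hεM : ε * M ≤ 1 / 16) (hc : -ε ≤ c) (hc' : c ≤ ε) (hpy : 1 / 2 ≤ py)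
    (hqx : 1 / 10 ≤ qx) (hqx' : qx ≤ 11 / 10) (hqy : -1 - ε ≤ qy) (hqy' : qy ≤ -ε)
    (hB1 : Avoid px py qx qy (1 / 10) (1 + ε)) (hC : Avoid px py qx qy (-1 / 2) c)
    (hB2 : Avoid px py qx qy (6 / 10) 0) (hA2 : Avoid px py qx qy (-1) (-1 - ε)) :
    0 < px ∨ px ≤ -M := by
  obtain ⟨k, m, eq, ep, hg⟩ := exists_graph (px := px) (qx := qx) (show qy < py by linarith)
  have h1 : 0 ≤ k + m * (-ε) := by
    rcases hqy'.eq_or_lt with h | h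
    · rw [← h]; linarith
    · rcases crossing h (fun y h1 h2 => hg _ _ hA2 y h1.le (by linarith) (by linarith)
        (by linarith)) with h2 | h2
      · linarith
      · linarith
  rcases crossing (lt_min (show c < py by linarith) (show c < 1 + c by linarith))
    (fun y h1 h2 => hg _ _ hC y (by linarith) (h2.le.trans (min_le_left _ _)) h1
      (by linarith [lt_of_lt_of_le h2 (min_le_right _ _)])) with ⟨h2, h3⟩ | ⟨h2, h3⟩
  · right
    have hm0 : m < 0 := by
      by_contra hcon
      push Not at hcon
      nlinarith
    have hm : m * ε ≤ -1 / 4 := by nlinarith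
    have hm' : m ≤ -4 * M := by
      by_contra hcon
      push Not at hcon
      nlinarith
    nlinarith
  · left
    have hu : (1 / 2 : ℝ) ≤ min py 1 := le_min hpy (by norm_num)
    rcases crossing (show 0 < min py 1 by linarith)
      (fun y h1 h2 => hg _ _ hB2 y (by linarith) (h2.le.trans (min_le_left _ _)) h1
        (by linarith [lt_of_lt_of_le h2 (min_le_right _ _)])) with ⟨h4, h5⟩ | ⟨h4, h5⟩
    · rcases le_or_gt py (1 + c) with h6 | h6
      · rw [min_eq_left h6] at h3
        linarith
      · rw [min_eq_right h6.le] at h3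
        have hu' : (1 : ℝ) - ε ≤ min py 1 := le_min (by linarith) (by linarith)
        have hu'' : min py 1 ≤ 1 := min_le_right _ _
        generalize min py 1 = u at *
        have hm : m ≤ 1 / 5 := by
          by_contra hcon
          push Not at hcon
          have := mul_le_mul_of_nonneg_left (show (9 / 10 : ℝ) ≤ u - c by linarith)
            (show 0 ≤ m by linarith)
          linarith
        have hm' : -1 / 5 ≤ m := by
          by_contra hcon
          push Not at hcon
          have := mul_le_mul_of_nonneg_left (show (9 / 10 : ℝ) ≤ 1 + c by linarith)
            (show 0 ≤ -m by linarith)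
          linarith
        have hd : m * (ε - c) ≤ 1 / 5 * (ε - c) := mul_le_mul_of_nonneg_right hm (by linarith)
        have hd' : -1 / 5 * (ε - c) ≤ m * (ε - c) := mul_le_mul_of_nonneg_right hm' (by linarith)
        rcases le_or_gt py (1 + ε) with h7 | h7
        · have := mul_le_mul_of_nonneg_right hm' (show 0 ≤ py - (1 + c) by linarith)
          linarith
        · rcases crossing (lt_min h7 (show 1 + ε < 2 + ε by linarith))
            (fun y h1 h2 => hg _ _ hB1 y (by linarith) (h2.le.trans (min_le_left _ _)) h1
              (by linarith [lt_of_lt_of_le h2 (min_le_right _ _)])) with ⟨h8, -⟩ | ⟨h8, -⟩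
          · linarith
          · have := mul_le_mul_of_nonneg_right hm (show 0 ≤ 1 + ε - u by linarith)
            linarith
    · have hm : 0 ≤ m := by
        by_contra hcon
        push Not at hcon
        nlinarith
      nlinarith

/-- `low_left` and `low_right` combined: `(qx, qy)` is a visible point of the left bottom square
and `(rx, ry)` a visible point of the right one. -/
theorem core {ε c M px py qx qy rx ry : ℝ} (hε : 0 < ε) (hε' : ε ≤ 1 / 160) (hM : 10 ≤ M)
    (hεM : ε * M ≤ 1 / 16) (hc : -ε ≤ c) (hc' : c ≤ ε) (hpy : 1 / 2 ≤ py)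
    (hqx : -1 ≤ qx) (hqx' : qx ≤ 0) (hqy : -1 - ε ≤ qy) (hqy' : qy ≤ -ε)
    (hrx : 1 / 10 ≤ rx) (hrx' : rx ≤ 11 / 10) (hry : -1 - ε ≤ ry) (hry' : ry ≤ -ε)
    (hA1 : Avoid px py qx qy (-1) (1 + ε)) (hC : Avoid px py qx qy (-1 / 2) c)
    (hB2 : Avoid px py qx qy (6 / 10) 0) (hB3 : Avoid px py qx qy (1 / 10) (-1 - ε))
    (hB1 : Avoid px py rx ry (1 / 10) (1 + ε)) (hC' : Avoid px py rx ry (-1 / 2) c)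
    (hB2' : Avoid px py rx ry (6 / 10) 0) (hA2 : Avoid px py rx ry (-1) (-1 - ε)) :
    M ≤ |px| := by
  have h1 := low_left hε hε' hM hεM hc hc' hpy hqx hqx' hqy hqy' hA1 hC hB2 hB3
  have h2 := low_right hε hε' hM hεM hc hc' hpy hrx hrx' hry hry' hB1 hC' hB2' hA2
  rw [le_abs]
  rcases h1 with h1 | h1
  · rcases h2 with h2 | h2
    · linarith
    · right; linarith
  · left; exact h1

/-! ### Unit squares in the Euclidean plane -/

theorem interior_UnitSq (a b : ℝ) :
    interior (UnitSq a b) = {p | (a < p 0 ∧ p 0 < a + 1) ∧ (b < p 1 ∧ p 1 < b + 1)} := by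
  have hcont (i : Fin 2) : Continuous (fun p : E2 => p i) := by fun_prop
  have hopen (i : Fin 2) : IsOpenMap (fun p : E2 => p i) := by
    refine (EuclideanSpace.proj (𝕜 := ℝ) i).isOpenMap ?_
    intro x
    exact ⟨WithLp.toLp 2 (fun _ => x), rfl⟩
  have : UnitSq a b =
      (fun p : E2 => p 0) ⁻¹' Icc a (a + 1) ∩ (fun p : E2 => p 1) ⁻¹' Icc b (b + 1) := rfl
  rw [this, interior_inter, ← (hopen 0).preimage_interior_eq_interior_preimage (hcont 0),
    ← (hopen 1).preimage_interior_eq_interior_preimage (hcont 1), interior_Icc, interior_Icc]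
  rfl

theorem isClosed_UnitSq (a b : ℝ) : IsClosed (UnitSq a b) := by
  have hcont (i : Fin 2) : Continuous (fun p : E2 => p i) := by fun_prop
  exact (isClosed_Icc.preimage (hcont 0)).inter (isClosed_Icc.preimage (hcont 1))

theorem mem_UnitSq {a b x y : ℝ} (h1 : a ≤ x) (h2 : x ≤ a + 1) (h3 : b ≤ y) (h4 : y ≤ b + 1) :
    (!₂[x, y] : E2) ∈ UnitSq a b :=
  ⟨⟨h1, h2⟩, h3, h4⟩

theorem disjoint_UnitSq {a b a' b' : ℝ}
    (h : a + 1 < a' ∨ a' + 1 < a ∨ b + 1 < b' ∨ b' + 1 < b) :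
    Disjoint (UnitSq a b) (UnitSq a' b') := by
  rw [Set.disjoint_left]
  rintro p ⟨⟨h1, h2⟩, h3, h4⟩ ⟨⟨h5, h6⟩, h7, h8⟩
  rcases h with h | h | h | h <;> linarith

theorem avoid_of_disjoint {p q : E2} {a b : ℝ}
    (h : Disjoint (segment ℝ p q) (interior (UnitSq a b))) :
    Avoid (p 0) (p 1) (q 0) (q 1) a b := by
  intro t h0 h1 hin
  refine Set.disjoint_left.1 h (show q + t • (p - q) ∈ segment ℝ p q from ?_) ?_
  · rw [segment_symm, segment_eq_image']
    exact ⟨t, ⟨h0, h1⟩, rfl⟩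
  · rw [interior_UnitSq]
    simpa using hin

/-- A line `α x + β y = κ` that weakly separates `p` and `q` from an open unit square certifies
that the segment between them misses it. -/
theorem disjoint_of_sep {p q : E2} {a b : ℝ} (α β κ : ℝ)
    (hp : κ ≤ α * p 0 + β * p 1) (hq : κ ≤ α * q 0 + β * q 1)
    (hbox : ∀ x y : ℝ, a < x → x < a + 1 → b < y → y < b + 1 → α * x + β * y < κ) :
    Disjoint (segment ℝ p q) (interior (UnitSq a b)) := by
  rw [Set.disjoint_left]
  rintro _ ⟨s, t, hs, ht, hst, rfl⟩ hin
  rw [interior_UnitSq] at hin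
  obtain ⟨⟨h1, h2⟩, h3, h4⟩ := hin
  have h := hbox _ _ h1 h2 h3 h4
  simp only [PiLp.add_apply, PiLp.smul_apply, smul_eq_mul] at h
  have e1 := mul_le_mul_of_nonneg_left hp hs
  have e2 := mul_le_mul_of_nonneg_left hq ht
  have e3 : κ = s * κ + t * κ := by rw [← add_mul, hst, one_mul]
  nlinarith

/-! ### The brick wall -/

/-- Lower left corners of the six squares: top, middle, bottom row, each from left to right. -/
def wall (ε : ℝ) : Fin 6 → ℝ × ℝ :=
  ![(-1, 1 + ε), (1 / 10, 1 + ε), (-1 / 2, ε / 2), (6 / 10, 0), (-1, -1 - ε), (1 / 10, -1 - ε)]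

theorem wall_disjoint {ε : ℝ} (hε : 0 < ε) (i j : Fin 6) (hij : i ≠ j) :
    Disjoint (UnitSq (wall ε i).1 (wall ε i).2) (UnitSq (wall ε j).1 (wall ε j).2) := by
  wlog hlt : i < j generalizing i j
  · exact (this j i hij.symm (lt_of_le_of_ne (not_lt.1 hlt) hij.symm)).symm
  apply disjoint_UnitSq
  fin_cases i <;> fin_cases j <;> first
    | exact absurd hlt (by decide)
    | (left; norm_num [wall]; done)
    | (right; right; right; norm_num [wall]; linarith)

theorem hull_subset {ε : ℝ} (hε : 0 < ε) (hε' : ε ≤ 1 / 160) :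
    convexHull ℝ (⋃ i, UnitSq (wall ε i).1 (wall ε i).2) ⊆
      {p : E2 | p 0 ∈ Icc (-2) 2 ∧ p 1 ∈ Icc (-2) 3} := by
  have hlin (i : Fin 2) : IsLinearMap ℝ (fun p : E2 => p i) :=
    ⟨fun _ _ => rfl, fun _ _ => rfl⟩
  apply convexHull_min
  · refine iUnion_subset fun i => ?_
    rintro p ⟨⟨h1, h2⟩, h3, h4⟩
    fin_cases i <;> simp [wall] at h1 h2 h3 h4 <;>
      exact ⟨⟨by linarith, by linarith⟩, by linarith, by linarith⟩
  · exact ((convex_Icc _ _).is_linear_preimage (hlin 0)).inter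
      ((convex_Icc _ _).is_linear_preimage (hlin 1))

theorem wall_far {ε M : ℝ} (hε : 0 < ε) (hε' : ε ≤ 1 / 160) (hM : 10 ≤ M) (hεM : ε * M ≤ 1 / 16)
    (p : E2) (h : ∀ i : Fin 6, CanSee (Set.range fun i => UnitSq (wall ε i).1 (wall ε i).2) p
      (UnitSq (wall ε i).1 (wall ε i).2)) : M ≤ |p 0| := by
  have key : ∀ i : Fin 6, ∃ q ∈ UnitSq (wall ε i).1 (wall ε i).2, ∀ j : Fin 6,
      Avoid (p 0) (p 1) (q 0) (q 1) (wall ε j).1 (wall ε j).2 := by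
    intro i
    obtain ⟨q, hq, hav⟩ := h i
    exact ⟨q, (isClosed_UnitSq _ _).frontier_subset hq,
      fun j => avoid_of_disjoint (hav _ ⟨j, rfl⟩)⟩
  rcases le_total (1 / 2) (p 1) with hp | hp
  · obtain ⟨q, ⟨⟨q1, q2⟩, q3, q4⟩, hq⟩ := key 4
    obtain ⟨r, ⟨⟨r1, r2⟩, r3, r4⟩, hr⟩ := key 5
    simp [wall] at q1 q2 q3 q4 r1 r2 r3 r4
    exact core (c := ε / 2) hε hε' hM hεM (by linarith) (by linarith) hp q1 q2 (by linarith)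
      (by linarith) (by linarith) (by linarith) (by linarith) (by linarith) (hq 0) (hq 2) (hq 3) (hq 5)
      (hr 1) (hr 2) (hr 3) (hr 4)
  · -- the reflection `y ↦ 1 - y` exchanges the top and the bottom row
    obtain ⟨q, ⟨⟨q1, q2⟩, q3, q4⟩, hq⟩ := key 0
    obtain ⟨r, ⟨⟨r1, r2⟩, r3, r4⟩, hr⟩ := key 1
    simp [wall] at q1 q2 q3 q4 r1 r2 r3 r4
    have e1 : -(-1 - ε) = 1 + ε := by ring
    have e2 : -(1 + ε) = -1 - ε := by ring
    have q0 := e1 ▸ (hq 4).reflect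
    have q5 := e2 ▸ (hq 1).reflect
    have s1 := e1 ▸ (hr 5).reflect
    have s4 := e2 ▸ (hr 0).reflect
    have q_mid := neg_zero (G := ℝ) ▸ (hq 3).reflect
    have s_mid := neg_zero (G := ℝ) ▸ (hr 3).reflect
    exact core (c := -(ε / 2)) hε hε' hM hεM (by linarith) (by linarith)
      (show 1 / 2 ≤ 1 - p 1 by linarith) q1 q2 (qy := 1 - q 1) (by linarith) (by linarith)
      (by linarith) (by linarith) (ry := 1 - r 1) (by linarith) (by linarith)
      q0 (hq 2).reflect q_mid q5 s1 (hr 2).reflect s_mid s4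

/-! ### The observation point -/

/-- A point of a square witnesses visibility as soon as the line of sight misses all six interiors:
it is then automatically a boundary point. -/
theorem canSee_of {ε : ℝ} {p q : E2} {i : Fin 6} (hq : q ∈ UnitSq (wall ε i).1 (wall ε i).2)
    (h : ∀ j, Disjoint (segment ℝ p q) (interior (UnitSq (wall ε j).1 (wall ε j).2))) :
    CanSee (Set.range fun i => UnitSq (wall ε i).1 (wall ε i).2) p
      (UnitSq (wall ε i).1 (wall ε i).2) := by
  refine ⟨q, ?_, ?_⟩
  · rw [(isClosed_UnitSq _ _).frontier_eq]
    exact ⟨hq, Set.disjoint_left.1 (h i) (right_mem_segment ℝ p q)⟩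
  · rintro _ ⟨j, rfl⟩
    exact h j

/-- Visibility of a point `(x, y)` of the wall from `(px, 1/2)`. The two squares of the top row lie
above the height `1 + ε`, those of the bottom row below `-ε`, and lines of sight stay between these
heights; so only the two middle squares need individual separating lines, the left one with
unprimed and the right one with primed coefficients. -/
theorem canSee_wall {ε px x y : ℝ} (hε : 0 < ε) (i : Fin 6)
    (hi : !₂[x, y] ∈ UnitSq (wall ε i).1 (wall ε i).2) (hy : -ε ≤ y) (hy' : y ≤ 1 + ε)
    (α β κ α' β' κ' : ℝ)
    (hp : κ ≤ α * px + β * (1 / 2)) (hq : κ ≤ α * x + β * y)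
    (hbox : ∀ x y : ℝ, -1 / 2 < x → x < 1 / 2 → ε / 2 < y → y < ε / 2 + 1 → α * x + β * y < κ)
    (hp' : κ' ≤ α' * px + β' * (1 / 2)) (hq' : κ' ≤ α' * x + β' * y)
    (hbox' : ∀ x y : ℝ, 6 / 10 < x → x < 16 / 10 → 0 < y → y < 1 → α' * x + β' * y < κ') :
    CanSee (Set.range fun i => UnitSq (wall ε i).1 (wall ε i).2) !₂[px, 1 / 2]
      (UnitSq (wall ε i).1 (wall ε i).2) := by
  refine canSee_of hi fun j => ?_
  have top (a : ℝ) : Disjoint (segment ℝ (!₂[px, 1 / 2] : E2) !₂[x, y])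
      (interior (UnitSq a (1 + ε))) :=
    disjoint_of_sep 0 (-1) (-(1 + ε)) (by simp; linarith) (by simp; linarith)
      (fun x y _ _ _ _ => by linarith)
  have bot (a : ℝ) : Disjoint (segment ℝ (!₂[px, 1 / 2] : E2) !₂[x, y])
      (interior (UnitSq a (-1 - ε))) :=
    disjoint_of_sep 0 1 (-ε) (by simp; linarith) (by simp; linarith)
      (fun x y _ _ _ _ => by linarith)
  have mid : Disjoint (segment ℝ (!₂[px, 1 / 2] : E2) !₂[x, y])
      (interior (UnitSq (-1 / 2) (ε / 2))) :=
    disjoint_of_sep α β κ (by simpa using hp) (by simpa using hq)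
      (fun x y h1 h2 h3 h4 => hbox x y h1 (by linarith) h3 h4)
  have mid' : Disjoint (segment ℝ (!₂[px, 1 / 2] : E2) !₂[x, y])
      (interior (UnitSq (6 / 10) 0)) :=
    disjoint_of_sep α' β' κ' (by simpa using hp') (by simpa using hq')
      (fun x y h1 h2 h3 h4 => hbox' x y h1 (by linarith) h3 (by linarith))
  fin_cases j
  exacts [top _, top _, mid, mid', bot _, bot _]

theorem wall_seen {ε : ℝ} (hε : 0 < ε) (hε' : ε ≤ 1 / 160) (i : Fin 6) :
    CanSee (Set.range fun i => UnitSq (wall ε i).1 (wall ε i).2) !₂[2 / ε, 1 / 2]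
      (UnitSq (wall ε i).1 (wall ε i).2) := by
  obtain ⟨L, hL⟩ : ∃ L, L = 2 / ε := ⟨_, rfl⟩
  have hεL : ε * L = 2 := by rw [hL]; field_simp
  have hL2 : 2 ≤ L := by nlinarith
  rw [← hL]
  fin_cases i
  · -- lower right corner, over both middle squares
    refine canSee_wall (x := 0) (y := 1 + ε) hε 0 ?_ (by linarith) (by linarith)
      (ε / 2) 1 (1 + ε / 2 + ε / 2 * (1 / 2)) (ε / 2) 1 (1 + ε / 2 * (16 / 10)) ?_ ?_ ?_ ?_ ?_ ?_
    · exact mem_UnitSq (a := (-1)) (b := (1 + ε)) (by linarith) (by linarith) (by linarith)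
        (by linarith)
    · linarith
    · linarith
    · intro x y h1 h2 h3 h4; nlinarith
    · linarith
    · linarith
    · intro x y h1 h2 h3 h4; nlinarith
  · -- lower right corner, over the right middle square
    refine canSee_wall (x := 11 / 10) (y := 1 + ε) hε 1 ?_ (by linarith) (by linarith)
      1 0 (1 / 2) ε 1 (1 + ε * (16 / 10)) ?_ ?_ ?_ ?_ ?_ ?_
    · exact mem_UnitSq (a := (1 / 10)) (b := (1 + ε)) (by linarith) (by linarith) (by linarith)
        (by linarith)
    · linarith
    · linarith
    · intro x y h1 h2 h3 h4; linarith
    · linarith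
    · linarith
    · intro x y h1 h2 h3 h4; nlinarith
  · -- upper right corner, over the right middle square
    refine canSee_wall (x := 1 / 2) (y := 1 + ε / 2) hε 2 ?_ (by linarith) (by linarith)
      1 0 (1 / 2) (4 / 10 * ε) 1 (1 + 4 / 10 * ε * (16 / 10)) ?_ ?_ ?_ ?_ ?_ ?_
    · exact mem_UnitSq (a := (-1 / 2)) (b := (ε / 2)) (by linarith) (by linarith) (by linarith)
        (by linarith)
    · linarith
    · linarith
    · intro x y h1 h2 h3 h4; linarith
    · linarith
    · linarith
    · intro x y h1 h2 h3 h4; nlinarith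
  · -- midpoint of the right edge, directly
    refine canSee_wall (x := 16 / 10) (y := 1 / 2) hε 3 ?_ (by linarith) (by linarith)
      1 0 (1 / 2) 1 0 (16 / 10) ?_ ?_ ?_ ?_ ?_ ?_
    · exact mem_UnitSq (a := (6 / 10)) (b := 0) (by linarith) (by linarith) (by linarith)
        (by linarith)
    · linarith
    · linarith
    · intro x y h1 h2 h3 h4; linarith
    · linarith
    · linarith
    · intro x y h1 h2 h3 h4; linarith
  · -- upper right corner, under both middle squares
    refine canSee_wall (x := 0) (y := -ε) hε 4 ?_ (by linarith) (by linarith)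
      (ε / 2) (-1) (ε / 2 * (1 / 2) - ε / 2) (ε / 2) (-1) (ε / 2 * (16 / 10)) ?_ ?_ ?_ ?_ ?_ ?_
    · exact mem_UnitSq (a := (-1)) (b := (-1 - ε)) (by linarith) (by linarith) (by linarith)
        (by linarith)
    · linarith
    · linarith
    · intro x y h1 h2 h3 h4; nlinarith
    · linarith
    · linarith
    · intro x y h1 h2 h3 h4; nlinarith
  · -- upper right corner, under the right middle square
    refine canSee_wall (x := 11 / 10) (y := -ε) hε 5 ?_ (by linarith) (by linarith)
      1 0 (1 / 2) ε (-1) (ε * (16 / 10)) ?_ ?_ ?_ ?_ ?_ ?_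
    · exact mem_UnitSq (a := (1 / 10)) (b := (-1 - ε)) (by linarith) (by linarith) (by linarith)
        (by linarith)
    · linarith
    · linarith
    · intro x y h1 h2 h3 h4; linarith
    · linarith
    · linarith
    · intro x y h1 h2 h3 h4; nlinarith

/-- For every `Δ > 0` there are six pairwise disjoint axis-parallel unit squares,
with convex hull of diameter at most 10, observable from a single point, such that
every single observation point is at distance at least `Δ` from the convex hull. -/
theorem far_single_observation_point (Δ : ℝ) (hΔ : 0 < Δ) :
    ∃ sq : Fin 6 → ℝ × ℝ,
      (∀ i j : Fin 6, i ≠ j →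
        Disjoint (UnitSq (sq i).1 (sq i).2) (UnitSq (sq j).1 (sq j).2)) ∧
      Metric.diam (convexHull ℝ (⋃ i, UnitSq (sq i).1 (sq i).2)) ≤ 10 ∧
      (∃ p : E2, ∀ i : Fin 6,
        CanSee (Set.range fun i => UnitSq (sq i).1 (sq i).2) p (UnitSq (sq i).1 (sq i).2)) ∧
      (∀ p : E2,
        (∀ i : Fin 6,
          CanSee (Set.range fun i => UnitSq (sq i).1 (sq i).2) p (UnitSq (sq i).1 (sq i).2)) →
        Δ ≤ Metric.infDist p (convexHull ℝ (⋃ i, UnitSq (sq i).1 (sq i).2))) := by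
  obtain ⟨ε, hε_def⟩ : ∃ ε, ε = 1 / (16 * (Δ + 10)) := ⟨_, rfl⟩
  have hε : 0 < ε := by rw [hε_def]; positivity
  have hεM : ε * (Δ + 10) = 1 / 16 := by rw [hε_def]; field_simp
  have hε' : ε ≤ 1 / 160 := by nlinarith
  refine ⟨wall ε, wall_disjoint hε, ?_, ⟨_, wall_seen hε hε'⟩, fun p hp => ?_⟩
  · refine Metric.diam_le_of_forall_dist_le (by norm_num) fun x hx y hy => ?_
    obtain ⟨⟨x1, x2⟩, x3, x4⟩ := hull_subset hε hε' hx
    obtain ⟨⟨y1, y2⟩, y3, y4⟩ := hull_subset hε hε' hy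
    rw [EuclideanSpace.dist_eq, Fin.sum_univ_two, Real.dist_eq, Real.dist_eq, sq_abs, sq_abs]
    apply Real.sqrt_le_iff.2
    constructor
    · norm_num
    · have h1 : |x 0 - y 0| ≤ 4 := abs_le.2 ⟨by linarith, by linarith⟩
      have h2 : |x 1 - y 1| ≤ 5 := abs_le.2 ⟨by linarith, by linarith⟩
      have h3 := sq_le_sq' (by linarith [abs_le.1 h1]) (abs_le.1 h1).2
      have h4 := sq_le_sq' (by linarith [abs_le.1 h2]) (abs_le.1 h2).2
      linarith
  · have hfar := wall_far hε hε' (by linarith) hεM.le p hp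
    have hne : (convexHull ℝ (⋃ i, UnitSq (wall ε i).1 (wall ε i).2)).Nonempty := by
      obtain ⟨q, hq, -⟩ := hp 0
      exact ⟨q, subset_convexHull ℝ _
        (mem_iUnion.2 ⟨0, (isClosed_UnitSq _ _).frontier_subset hq⟩)⟩
    refine (Metric.le_infDist hne).2 fun y hy => ?_
    obtain ⟨⟨y1, y2⟩, -⟩ := hull_subset hε hε' hy
    have h1 : |p 0 - y 0| ≤ dist p y := by
      have := PiLp.norm_apply_le (p - y) 0
      rw [dist_eq_norm]
      simpa using this
    have h2 : |p 0| - |y 0| ≤ |p 0 - y 0| := abs_sub_abs_le_abs_sub _ _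
    have h3 : |y 0| ≤ 2 := abs_le.2 ⟨y1, y2⟩
    linarith

end
end

section
/- Let F be a finite family of pairwise disjoint translates of a convex body in ℝ², let C ∈ F, and let V(C) = {p ∈ ℝ² : there exists q ∈ ∂C such that the closed segment [p,q] does not intersect the interior of any member of F}. Then for every point o ∉ C ∪ V(C), there exists a ray emanating from o (a set {o + t·v : t ≥ 0} for some nonzero vector v) that is disjoint from C ∪ V(C). -/
/-!
Fix `o ∉ C ∪ V(C)`. In the direction of every point `r ∈ C` some obstacle `D ≠ C` is met strictly
before `C` (`exists_blocker`). Let `w` be the translation carrying `D` to `C`.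

The geometric core is `segment_blocked`: if `D` blocks the direction of `r`, and `q ∈ C` is not on
the same side of the line through `o` and `r` as the vector `w`, then `D` blocks every segment from
`q` to the ray opposite to `r`, namely `{o - t (r - o) : t ≥ 0}`. The reason is that `D` contains
`q - w` as well as a point between `o` and `r`, so that its chord joining these two crosses the
line from `o - t (r - o)` to `q`. The crossing lies within the segment, and the remaining positions
of `w` do not occur, since otherwise a chord of `D` would meet the chord of `C` from `r` to `q`.

It remains to find one `r ∈ C` blocked by obstacles taking care of both sides
(`escape_of_blockers`). If some `w` is parallel to a direction that its obstacle blocks, that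
obstacle alone suffices. Otherwise `C` is covered by two open sets (`isOpen_setOf_blocks`),
according to the side of the direction of `r` on which `w` lies. If both meet `C`, they have a
common point in `C` because `C` is connected. If only one does, take for `r` a tangent point of `C`
as seen from `o` (`exists_extreme`), for which one of the two sides contains no point of `C`.
-/

open Set Metric ENNReal

noncomputable section

/-- The (unlimited vision) visibility region of `C` with respect to the obstacle
family `F`: all points that see some boundary point of `C`. -/
def Vis (F : Set (Set E2)) (C : Set E2) : Set E2 :=
  {p | ∃ q ∈ frontier C, ∀ D ∈ F, Disjoint (segment ℝ p q) (interior D)}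

/-- The planar cross product; its sign tells on which side of the line `ℝ a` the vector `b` lies. -/
def cross (a b : E2) : ℝ := a 0 * b 1 - a 1 * b 0

lemma cross_decomp {a b : E2} (h : cross a b ≠ 0) (w : E2) :
    w = (cross w b / cross a b) • a + (cross a w / cross a b) • b := by
  ext i
  simp only [PiLp.add_apply, PiLp.smul_apply, smul_eq_mul]
  field_simp
  fin_cases i <;> simp [cross] <;> ring

lemma eq_smul_of_cross_eq_zero {a b : E2} (ha : a ≠ 0) (h : cross a b = 0) :
    ∃ μ : ℝ, b = μ • a := by
  simp only [cross] at h
  by_cases h0 : a 0 = 0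
  · have h1 : a 1 ≠ 0 := by
      intro h1
      apply ha
      ext i
      fin_cases i <;> simp [h0, h1]
    refine ⟨b 1 / a 1, ?_⟩
    ext i
    fin_cases i <;> simp <;> field_simp
    · rw [h0] at h ⊢
      simpa [h1] using h
  · refine ⟨b 0 / a 0, ?_⟩
    ext i
    fin_cases i <;> simp <;> field_simp
    linarith

/-- The blocking step. Seen from `o`, the body `D` blocks the direction `a` before `C`. If the
translation `w = α a - β b` carrying `D` to `C` satisfies `β ≥ 0`, i.e. `w` and `b` lie weakly on opposite
sides of the line `ℝ a`, then `D` separates `o + b ∈ C` from every point of the ray opposite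
to `a`. -/
lemma segment_blocked {C D : Set E2} (hC : Convex ℝ C) (hD : Convex ℝ D) (hdis : Disjoint C D)
    {o a b : E2} {s α β t : ℝ} (ha : o + a ∈ C) (hb : o + b ∈ C) (hs0 : 0 < s) (hs1 : s < 1)
    (hx : o + s • a ∈ interior D) (hβ : 0 ≤ β)
    (haD : o + a - (α • a - β • b) ∈ D) (hbD : o + b - (α • a - β • b) ∈ D) (ht : 0 ≤ t) :
    ∃ z ∈ segment ℝ (o + t • (-a)) (o + b), z ∈ interior D := by
  have hxD := interior_subset hx
  rcases le_or_gt α 0 with hα | hα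
  · -- `w` points into the opposite cone: the `D`-chord from `o + s a` to `o + a - w` stays in the
    -- cone spanned by `a, b` and crosses the `C`-chord from `o + a` to `o + b`.
    exfalso
    have hpos : 0 < 1 - α + β - s := by linarith
    obtain ⟨θ, hθ⟩ : ∃ θ, θ = (1 - s) / (1 - α + β - s) := ⟨_, rfl⟩
    have hθ0 : 0 ≤ θ := by rw [hθ]; exact div_nonneg (by linarith) hpos.le
    have hθ1 : θ ≤ 1 := by rw [hθ, div_le_one hpos]; linarith
    have hθe : θ * (1 - α + β - s) = 1 - s := by rw [hθ]; field_simp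
    have h1 := hD hxD haD (sub_nonneg.2 hθ1) hθ0 (by ring)
    have h2 := hC ha hb (a := (1 - θ) * s + θ * (1 - α)) (b := θ * β)
      (add_nonneg (mul_nonneg (by linarith) hs0.le) (mul_nonneg hθ0 (by linarith)))
      (mul_nonneg hθ0 hβ) (by linarith)
    refine Set.disjoint_left.1 hdis h2 ?_
    convert h1 using 1
    linear_combination (norm := module) hθe • o
  · have hpos : 0 < s + α + t + t * β := by positivity
    obtain ⟨θ, hθ⟩ : ∃ θ, θ = (s + t) / (s + α + t + t * β) := ⟨_, rfl⟩
    have hθ0 : 0 ≤ θ := by rw [hθ]; positivity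
    have hθ1 : θ < 1 := by
      rw [hθ, div_lt_one hpos]
      have := mul_nonneg ht hβ
      linarith
    have hθe : θ * (s + α + t + t * β) = s + t := by rw [hθ]; field_simp
    have hz := hD.combo_interior_self_mem_interior hx hbD (sub_pos.2 hθ1) hθ0 (by ring)
    -- `s β ≤ α`, since otherwise the `D`-chord from `o + s a` to `o + b - w` passes beyond `o + b`
    -- and crosses the `C`-chord from `o + a` to `o + b`.
    have hle : s * β ≤ α := by
      by_contra! hlt
      have hsβ : s * β ≤ β := by nlinarith
      have hpos' : 0 < 1 + β - α - s := by linarith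
      obtain ⟨φ, hφ⟩ : ∃ φ, φ = (1 - s) / (1 + β - α - s) := ⟨_, rfl⟩
      have hφ0 : 0 ≤ φ := by rw [hφ]; exact div_nonneg (by linarith) hpos'.le
      have hφ1 : φ ≤ 1 := by rw [hφ, div_le_one hpos']; linarith
      have hφe : φ * (1 + β - α - s) = 1 - s := by rw [hφ]; field_simp
      have hφs : φ * (s + α) ≤ s := by
        rw [hφ, div_mul_eq_mul_div, div_le_iff₀ hpos']
        nlinarith
      have h1 := hD hxD hbD (sub_nonneg.2 hφ1) hφ0 (by ring)
      have h2 := hC ha hb (a := (1 - φ) * s - φ * α) (b := φ * (1 + β))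
        (by linarith) (by positivity) (by linarith)
      refine Set.disjoint_left.1 hdis h2 ?_
      convert h1 using 1
      linear_combination (norm := module) hφe • o
    have hτ : θ * (1 + β) ≤ 1 := by
      rw [hθ, div_mul_eq_mul_div, div_le_one hpos]
      nlinarith
    refine ⟨_, ⟨1 - θ * (1 + β), θ * (1 + β), by linarith, by positivity, by ring, ?_⟩, hz⟩
    linear_combination (norm := module) hθe • a

/-- The degenerate case of `segment_blocked`: an obstacle met strictly between `o` and `o + a` also
lies before every other point `o + μ a` of `C`, since otherwise it would meet `C`. -/
lemma segment_blocked_collinear {C D : Set E2} (hC : Convex ℝ C) (hdis : Disjoint C D)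
    {o a : E2} {s μ t : ℝ} (ha : o + a ∈ C) (hb : o + μ • a ∈ C) (hs0 : 0 < s) (hs1 : s < 1)
    (hx : o + s • a ∈ interior D) (ht : 0 ≤ t) :
    ∃ z ∈ segment ℝ (o + t • (-a)) (o + μ • a), z ∈ interior D := by
  have hμ : s < μ := by
    by_contra! hle
    have hpos : 0 < 1 - μ := by linarith
    have h := hC hb ha (a := (1 - s) / (1 - μ)) (b := (s - μ) / (1 - μ))
      (div_nonneg (by linarith) hpos.le) (div_nonneg (by linarith) hpos.le)
      (by field_simp; ring)
    refine Set.disjoint_left.1 hdis h (interior_subset ?_)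
    convert hx using 1
    match_scalars <;> field_simp <;> ring
  have hpos : 0 < μ + t := by linarith
  refine ⟨_, ⟨(μ - s) / (μ + t), (s + t) / (μ + t), div_nonneg (by linarith) hpos.le,
    div_nonneg (by linarith) hpos.le, by field_simp; ring, ?_⟩, hx⟩
  match_scalars <;> field_simp <;> ring

/-- A point `o` that sees nothing of `C` is blocked, in the direction of each point of `C`, by a
member of the family other than `C`, met strictly before that point. -/
lemma exists_blocker {F : Set (Set E2)} (hdisj : F.Pairwise Disjoint) {C : Set E2} (hC : C ∈ F)
    (hcpt : IsCompact C) {o : E2} (hoC : o ∉ C) (hoV : o ∉ Vis F C) {a : E2} (ha : o + a ∈ C) :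
    ∃ D ∈ F, D ≠ C ∧ ∃ s : ℝ, 0 < s ∧ s < 1 ∧ o + s • a ∈ interior D := by
  have hcont : Continuous fun s : ℝ => o + s • a := by fun_prop
  obtain ⟨s₀, ⟨⟨h00, h01⟩, hs₀C⟩, hmin⟩ :=
    (isCompact_Icc.inter_right (hcpt.isClosed.preimage hcont) :
      IsCompact (Icc (0 : ℝ) 1 ∩ (fun s : ℝ => o + s • a) ⁻¹' C)).exists_isLeast
      ⟨1, by simp, by simpa using ha⟩
  have hs₀C : o + s₀ • a ∈ C := hs₀C
  have hs₀pos : 0 < s₀ := by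
    rcases h00.eq_or_lt with h | h
    · subst h
      simp [hoC] at hs₀C
    · exact h
  have hnot : o + s₀ • a ∉ interior C := by
    intro hint
    have hev : ∀ᶠ s in nhdsWithin s₀ (Iio s₀), o + s • a ∈ interior C :=
      nhdsWithin_le_nhds ((isOpen_interior.preimage hcont).mem_nhds hint)
    obtain ⟨s, hs, hs'⟩ := (hev.and (Ioo_mem_nhdsLT hs₀pos)).exists
    exact absurd (hmin ⟨⟨hs'.1.le, by linarith [hs'.2]⟩, interior_subset (s := C) hs⟩) (not_le.2 hs'.2)
  have hfr : o + s₀ • a ∈ frontier C := ⟨subset_closure hs₀C, hnot⟩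
  have hblock : ∃ D ∈ F, ¬ Disjoint (segment ℝ o (o + s₀ • a)) (interior D) := by
    by_contra! h
    exact hoV ⟨_, hfr, h⟩
  obtain ⟨D, hDF, hD⟩ := hblock
  obtain ⟨y, ⟨c, d, hc, hd, hcd, rfl⟩, hy⟩ := Set.not_disjoint_iff.1 hD
  have hyeq : c • o + d • (o + s₀ • a) = o + (d * s₀) • a := by
    linear_combination (norm := module) hcd • o
  rw [hyeq] at hy
  have hd1 : d ≤ 1 := by linarith
  have hu1 : d * s₀ ≤ s₀ := by nlinarith
  have hne : D ≠ C := by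
    rintro rfl
    have := hmin ⟨⟨by positivity, hu1.trans h01⟩, interior_subset (s := D) hy⟩
    exact hnot (le_antisymm hu1 this ▸ hy)
  have hlt : d * s₀ < s₀ := by
    refine lt_of_le_of_ne hu1 fun h => ?_
    rw [h] at hy
    exact Set.disjoint_left.1 (hdisj hDF hC hne) (interior_subset hy) hs₀C
  have hev : ∀ᶠ s in nhdsWithin (d * s₀) (Ioi (d * s₀)), o + s • a ∈ interior D :=
    nhdsWithin_le_nhds ((isOpen_interior.preimage hcont).mem_nhds hy)
  obtain ⟨s, hs, hs'⟩ := (hev.and (Ioo_mem_nhdsGT hlt)).exists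
  exact ⟨D, hDF, hne, s, lt_of_le_of_lt (by positivity) hs'.1, lt_of_lt_of_le hs'.2 h01, hs⟩

/-- A compact convex set missing `o` has a tangent direction from `o` on either side; `σ = 1` and
`σ = -1` select the side. -/
lemma exists_extreme {C : Set E2} (hconv : Convex ℝ C) (hcpt : IsCompact C) (hne : C.Nonempty)
    {o : E2} (hoC : o ∉ C) (σ : ℝ) :
    ∃ r ∈ C, ∀ q ∈ C, σ * cross (r - o) (q - o) ≤ 0 := by
  obtain ⟨f, u, hfo, hf⟩ := geometric_hahn_banach_point_closed hconv hcpt.isClosed hoC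
  have hpos : ∀ q ∈ C, 0 < f (q - o) := fun q hq => by
    rw [map_sub]; linarith [hf q hq]
  obtain ⟨g, hg⟩ : ∃ g : E2, ∀ x : E2, f x = g 0 * x 0 + g 1 * x 1 := by
    refine ⟨(InnerProductSpace.toDual ℝ E2).symm f, fun x => ?_⟩
    have h := InnerProductSpace.toDual_symm_apply (𝕜 := ℝ) (x := x) (y := f)
    rw [← h, PiLp.inner_apply, Fin.sum_univ_two]
    simp only [RCLike.inner_apply, conj_trivial]
    ring
  have hcont : ContinuousOn (fun q : E2 => σ * cross g (q - o) / f (q - o)) C := by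
    apply ContinuousOn.div
    · unfold cross; fun_prop
    · fun_prop
    · exact fun q hq => (hpos q hq).ne'
  obtain ⟨r, hrC, hr⟩ := hcpt.exists_isMaxOn hne hcont
  refine ⟨r, hrC, fun q hq => ?_⟩
  have h := hr hq
  simp only [mem_ofPred_eq] at h
  rw [div_le_div_iff₀ (hpos q hq) (hpos r hrC)] at h
  have hgpos : 0 < g 0 ^ 2 + g 1 ^ 2 := by
    rcases (by positivity : 0 ≤ g 0 ^ 2 + g 1 ^ 2).eq_or_lt with h0 | h0
    · exfalso
      have h0' : g 0 = 0 := by nlinarith [sq_nonneg (g 0), sq_nonneg (g 1)]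
      have h1' : g 1 = 0 := by nlinarith [sq_nonneg (g 0), sq_nonneg (g 1)]
      have := hpos r hrC
      rw [hg, h0', h1'] at this
      simp at this
    · exact h0
  have key : (g 0 ^ 2 + g 1 ^ 2) * (σ * cross (r - o) (q - o)) ≤ 0 := by
    have hid : (g 0 ^ 2 + g 1 ^ 2) * (σ * cross (r - o) (q - o))
        = σ * cross g (q - o) * f (r - o) - σ * cross g (r - o) * f (q - o) := by
      rw [hg, hg]; simp only [cross]; ring
    linarith
  exact nonpos_of_mul_nonpos_right key hgpos

/-- `Blocks F C o σ r`: some obstacle other than `C`, carried to `C` by a translation `w`, meets the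
segment from `o` to `r` strictly before `r`, and `w` lies strictly on the side `σ` (positive for
`σ = 1`, negative for `σ = -1`) of the direction `r - o`. -/
def Blocks (F : Set (Set E2)) (C : Set E2) (o : E2) (σ : ℝ) (r : E2) : Prop :=
  ∃ D ∈ F, D ≠ C ∧ ∃ w : E2, (∀ x ∈ C, x - w ∈ D) ∧
    (∃ s : ℝ, 0 < s ∧ s < 1 ∧ o + s • (r - o) ∈ interior D) ∧ 0 < σ * cross (r - o) w

lemma isOpen_setOf_blocks (F : Set (Set E2)) (C : Set E2) (o : E2) (σ : ℝ) :
    IsOpen {r | Blocks F C o σ r} := by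
  have : {r | Blocks F C o σ r} = ⋃ D ∈ F, ⋃ (_ : D ≠ C), ⋃ w : E2, ⋃ (_ : ∀ x ∈ C, x - w ∈ D),
      (⋃ s ∈ Ioo (0 : ℝ) 1, {r | o + s • (r - o) ∈ interior D}) ∩
        {r | 0 < σ * cross (r - o) w} := by
    ext r
    simp only [Blocks, mem_ofPred_eq, mem_iUnion, mem_inter_iff, mem_Ioo, exists_prop, and_assoc]
  rw [this]
  refine isOpen_biUnion fun D _ => isOpen_iUnion fun _ => isOpen_iUnion fun w =>
    isOpen_iUnion fun _ => IsOpen.inter (isOpen_biUnion fun s _ => ?_) ?_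
  · exact isOpen_interior.preimage (f := fun r : E2 => o + s • (r - o)) (by fun_prop)
  · exact isOpen_lt continuous_const (by unfold cross; fun_prop)

/-- The side conditions under which the ray from `o` opposite to `r` escapes: each `q ∈ C` has an
obstacle `D` blocking the direction of `r` whose translation vector to `C` is not strictly on the
same side of the direction `r - o` as `q`. -/
lemma escape_of_blockers {F : Set (Set E2)} (hFconv : ∀ D ∈ F, Convex ℝ D)
    (hdisj : F.Pairwise Disjoint) {C : Set E2} (hC : C ∈ F) (hcl : IsClosed C) {o : E2}
    (hoC : o ∉ C) {r : E2} (hr : r ∈ C)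
    (h : ∀ q ∈ C, ∃ D ∈ F, D ≠ C ∧ ∃ w : E2, (∀ x ∈ C, x - w ∈ D) ∧
      (∃ s : ℝ, 0 < s ∧ s < 1 ∧ o + s • (r - o) ∈ interior D) ∧
      cross (r - o) w * cross (r - o) (q - o) ≤ 0) :
    ∃ v : E2, v ≠ 0 ∧ ∀ t : ℝ, 0 ≤ t → o + t • v ∉ C ∪ Vis F C := by
  have hr0 : r - o ≠ 0 := sub_ne_zero.2 fun h => hoC (h ▸ hr)
  have hra : o + (r - o) ∈ C := by simpa using hr
  refine ⟨-(r - o), neg_ne_zero.2 hr0, fun t ht => ?_⟩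
  rintro (hmem | ⟨q, hq, hvis⟩)
  · refine hoC ?_
    have := hFconv C hC hmem hra (a := 1 / (1 + t)) (b := t / (1 + t)) (by positivity)
      (by positivity) (by field_simp)
    convert this using 1
    match_scalars <;> field_simp <;> ring
  · have hqC : q ∈ C := hcl.frontier_subset hq
    have hqa : o + (q - o) ∈ C := by simpa using hqC
    obtain ⟨D, hDF, hne, w, hw, ⟨s, hs0, hs1, hx⟩, hcr⟩ := h q hqC
    have hCD : Disjoint C D := hdisj hC hDF hne.symm
    suffices ∃ z ∈ segment ℝ (o + t • (-(r - o))) (o + (q - o)), z ∈ interior D by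
      obtain ⟨z, hz, hz'⟩ := this
      rw [add_sub_cancel o q] at hz
      exact Set.disjoint_left.1 (hvis D hDF) hz hz'
    by_cases h0 : cross (r - o) (q - o) = 0
    · obtain ⟨μ, hμ⟩ := eq_smul_of_cross_eq_zero hr0 h0
      rw [hμ] at hqa ⊢
      exact segment_blocked_collinear (hFconv C hC) hCD hra hqa hs0 hs1 hx ht
    · have hdec := cross_decomp h0 w
      set α := cross w (q - o) / cross (r - o) (q - o)
      have hβ : 0 ≤ -(cross (r - o) w / cross (r - o) (q - o)) := by
        rw [neg_nonneg, ← mul_div_mul_right _ _ h0]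
        exact div_nonpos_of_nonpos_of_nonneg hcr (mul_self_nonneg _)
      have hw' : w = α • (r - o) - (-(cross (r - o) w / cross (r - o) (q - o))) • (q - o) := by
        rw [neg_smul, sub_neg_eq_add]; exact hdec
      refine segment_blocked (α := α) (hFconv C hC) (hFconv D hDF) hCD hra hqa hs0 hs1 hx hβ ?_ ?_ ht
      · rw [← hw']; exact hw _ hra
      · rw [← hw']; exact hw _ hqa

/-- For a finite family `F` of pairwise disjoint translates of a convex body and
`C ∈ F`, every point `o ∉ C ∪ V(C)` admits a ray emanating from `o` that is
disjoint from `C ∪ V(C)`. -/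
theorem escape_ray_for_translates
    (C₀ : Set E2) (hC₀ : IsConvexBody C₀)
    (F : Set (Set E2)) (hfin : F.Finite)
    (htr : ∀ D ∈ F, ∃ w : E2, D = (fun x => x + w) '' C₀)
    (hdisj : F.Pairwise Disjoint)
    (C : Set E2) (hC : C ∈ F)
    (o : E2) (ho : o ∉ C ∪ Vis F C) :
    ∃ v : E2, v ≠ 0 ∧ ∀ t : ℝ, 0 ≤ t → o + t • v ∉ C ∪ Vis F C := by
  obtain ⟨hconv₀, hcpt₀, hint₀⟩ := hC₀
  have hFconv : ∀ D ∈ F, Convex ℝ D := by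
    intro D hD
    obtain ⟨w, rfl⟩ := htr D hD
    simpa [add_comm] using hconv₀.translate w
  obtain ⟨wC, hwC⟩ := htr C hC
  have hcpt : IsCompact C := by
    rw [hwC]; exact hcpt₀.image (by fun_prop)
  have hneC : C.Nonempty := by
    rw [hwC]; exact (hint₀.mono interior_subset).image _
  have htrans : ∀ D ∈ F, ∃ w : E2, ∀ x ∈ C, x - w ∈ D := by
    intro D hD
    obtain ⟨wD, rfl⟩ := htr D hD
    refine ⟨wC - wD, fun x hx => ?_⟩
    rw [hwC] at hx
    obtain ⟨y, hy, rfl⟩ := hx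
    exact ⟨y, hy, by simp only; abel⟩
  have hoC : o ∉ C := fun h => ho (Or.inl h)
  have hoV : o ∉ Vis F C := fun h => ho (Or.inr h)
  have hblk : ∀ r ∈ C, ∃ D ∈ F, D ≠ C ∧ ∃ w : E2, (∀ x ∈ C, x - w ∈ D) ∧
      ∃ s : ℝ, 0 < s ∧ s < 1 ∧ o + s • (r - o) ∈ interior D := by
    intro r hr
    obtain ⟨D, hD, hne, hs⟩ :=
      exists_blocker hdisj hC hcpt hoC hoV (a := r - o) (by simpa using hr)
    obtain ⟨w, hw⟩ := htrans D hD
    exact ⟨D, hD, hne, w, hw, hs⟩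
  -- An obstacle blocking a direction parallel to its own translation vector suffices alone.
  by_cases hpar : ∃ r ∈ C, ∃ D ∈ F, D ≠ C ∧ ∃ w : E2, (∀ x ∈ C, x - w ∈ D) ∧
      (∃ s : ℝ, 0 < s ∧ s < 1 ∧ o + s • (r - o) ∈ interior D) ∧ cross (r - o) w = 0
  · obtain ⟨r, hr, D, hD, hne, w, hw, hs, h0⟩ := hpar
    exact escape_of_blockers hFconv hdisj hC hcpt.isClosed hoC hr
      fun q _ => ⟨D, hD, hne, w, hw, hs, by simp [h0]⟩
  have hcover : ∀ r ∈ C, Blocks F C o 1 r ∨ Blocks F C o (-1) r := by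
    intro r hr
    obtain ⟨D, hD, hne, w, hw, hs⟩ := hblk r hr
    rcases lt_trichotomy (cross (r - o) w) 0 with h | h | h
    · exact Or.inr ⟨D, hD, hne, w, hw, hs, by linarith⟩
    · exact absurd ⟨r, hr, D, hD, hne, w, hw, hs, h⟩ hpar
    · exact Or.inl ⟨D, hD, hne, w, hw, hs, by linarith⟩
  -- If every direction has a blocker on the side `σ`, then one on the side `-σ` is not needed at the
  -- tangent point `r` for which no `q ∈ C` lies strictly on the side `σ`.
  have hside : ∀ σ : ℝ, σ ^ 2 = 1 → (∀ r ∈ C, Blocks F C o σ r) →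
      ∃ v : E2, v ≠ 0 ∧ ∀ t : ℝ, 0 ≤ t → o + t • v ∉ C ∪ Vis F C := by
    intro σ hσ hall
    obtain ⟨r, hr, hext⟩ := exists_extreme (hFconv C hC) hcpt hneC hoC σ
    obtain ⟨D, hD, hne, w, hw, hs, hpos⟩ := hall r hr
    refine escape_of_blockers hFconv hdisj hC hcpt.isClosed hoC hr
      fun q hq => ⟨D, hD, hne, w, hw, hs, ?_⟩
    calc cross (r - o) w * cross (r - o) (q - o)
        = (σ * cross (r - o) w) * (σ * cross (r - o) (q - o)) := by
          linear_combination -(cross (r - o) w * cross (r - o) (q - o)) * hσ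
      _ ≤ 0 := mul_nonpos_of_nonneg_of_nonpos hpos.le (hext q hq)
  by_cases hA : ∃ r ∈ C, Blocks F C o 1 r
  · by_cases hB : ∃ r ∈ C, Blocks F C o (-1) r
    · obtain ⟨r, hr, ⟨D₁, hD₁, hne₁, w₁, hw₁, hs₁, hp₁⟩, ⟨D₂, hD₂, hne₂, w₂, hw₂, hs₂, hp₂⟩⟩ :=
        (hFconv C hC).isPreconnected _ _ (isOpen_setOf_blocks F C o 1)
          (isOpen_setOf_blocks F C o (-1)) hcover hA hB
      refine escape_of_blockers hFconv hdisj hC hcpt.isClosed hoC hr fun q _ => ?_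
      rcases le_total (cross (r - o) (q - o)) 0 with hq | hq
      · exact ⟨D₁, hD₁, hne₁, w₁, hw₁, hs₁,
          mul_nonpos_of_nonneg_of_nonpos (by linarith) hq⟩
      · exact ⟨D₂, hD₂, hne₂, w₂, hw₂, hs₂,
          mul_nonpos_of_nonpos_of_nonneg (by linarith) hq⟩
    · push Not at hB
      exact hside 1 (by norm_num) fun r hr => (hcover r hr).resolve_right (hB r hr)
  · push Not at hA
    exact hside (-1) (by norm_num) fun r hr => (hcover r hr).resolve_left (hA r hr)

end
end
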